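/- Let R and S be distinct elements of a signature 𝓡, let σ be an sp-formula containing at least one occurrence of ◇_S and no occurrence of ◇_R, and let q be a propositional variable not occurring in σ. Then the spi-logic axiomatised by {◇_R σ → q} is not complete: {◇_R σ → q} ⊨_Kr (◇_S ◇_R σ → ◇_R σ), but there is a (two-element) SLO validating ◇_R σ → q that does not validate ◇_S ◇_R σ → ◇_R σ, so {◇_R σ → q} ⊭_SLO (◇_S ◇_R σ → ◇_R σ). -/

import Mathlib

/-- Strictly positive modal formulas over a signature `Sig`:
propositional variables, `⊤`, conjunction, and a diamond `◇_r` for each `r : Sig`. -/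
inductive SP (Sig : Type) : Type
  | var : ℕ → SP Sig
  | top : SP Sig
  | and : SP Sig → SP Sig → SP Sig
  | dia : Sig → SP Sig → SP Sig

/-- An sp-implication `σ → τ` is a pair of sp-formulas. -/
abbrev SPImp (Sig : Type) := SP Sig × SP Sig

/-- A SLO of signature `Sig`: a meet-semilattice with a greatest element,
equipped with a monotone unary operator for each element of the signature. -/
structure SLO (Sig : Type) where
  carrier : Type
  [instInf : SemilatticeInf carrier]
  [instTop : OrderTop carrier]
  dia : Sig → carrier → carrier
  mono : ∀ r : Sig, Monotone (dia r)

attribute [instance] SLO.instInf SLO.instTop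

namespace SLO

variable {Sig : Type}

/-- Evaluation of an sp-formula in a SLO under a valuation of the variables. -/
def eval (A : SLO Sig) (v : ℕ → A.carrier) : SP Sig → A.carrier
  | .var n => v n
  | .top => ⊤
  | .and φ ψ => eval A v φ ⊓ eval A v ψ
  | .dia r φ => A.dia r (eval A v φ)

/-- A SLO validates an sp-implication `σ → τ` if under every valuation
the value of `σ` is below the value of `τ`. -/
def Valid (A : SLO Sig) (ι : SPImp Sig) : Prop :=
  ∀ v : ℕ → A.carrier, eval A v ι.1 ≤ eval A v ι.2

/-- A SLO validates a set of sp-implications. -/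
def ValidSet (A : SLO Sig) (Ax : Set (SPImp Sig)) : Prop :=
  ∀ ι ∈ Ax, Valid A ι

end SLO

/-- A Kripke frame: a nonempty type of worlds with a binary accessibility
relation for each element of the signature. -/
structure KFrame (Sig : Type) where
  world : Type
  [instNonempty : Nonempty world]
  rel : Sig → world → world → Prop

attribute [instance] KFrame.instNonempty

namespace KFrame

variable {Sig : Type}

/-- Truth of an sp-formula at a world of a Kripke model `(F, v)`. -/
def truth (F : KFrame Sig) (v : ℕ → Set F.world) : SP Sig → F.world → Prop
  | .var n, w => w ∈ v n
  | .top, _ => True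
  | .and φ ψ, w => truth F v φ w ∧ truth F v ψ w
  | .dia r φ, w => ∃ u, F.rel r w u ∧ truth F v φ u

/-- A frame validates an sp-implication `σ → τ` if in every Kripke model on it,
at every world, truth of `σ` implies truth of `τ`. -/
def Valid (F : KFrame Sig) (ι : SPImp Sig) : Prop :=
  ∀ (v : ℕ → Set F.world) (w : F.world), truth F v ι.1 w → truth F v ι.2 w

/-- A frame validates a set of sp-implications. -/
def ValidSet (F : KFrame Sig) (Ax : Set (SPImp Sig)) : Prop :=
  ∀ ι ∈ Ax, Valid F ι

/-- The complex algebra `F*` of a frame, as a SLO: all subsets of the worlds,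
with intersection as meet, the whole set as `⊤`, and
`◇_r X = {w | ∃ u ∈ X, rel r w u}`. -/
def cmpl (F : KFrame Sig) : SLO Sig where
  carrier := Set F.world
  dia r X := {w | ∃ u ∈ X, F.rel r w u}
  mono r := by
    intro X Y hXY w hw
    obtain ⟨u, hu, hr⟩ := hw
    exact ⟨u, hXY hu, hr⟩

end KFrame

/-- An sp-embedding between SLOs: an injective map preserving `⊤`,
binary meets, and each operator. -/
def IsSpEmbedding {Sig : Type} (A B : SLO Sig) (η : A.carrier → B.carrier) : Prop :=
  Function.Injective η ∧ η ⊤ = ⊤ ∧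
    (∀ a b : A.carrier, η (a ⊓ b) = η a ⊓ η b) ∧
    ∀ (r : Sig) (a : A.carrier), η (A.dia r a) = B.dia r (η a)

/-- `Ax ⊨_Kr ι`: every frame validating every member of `Ax` validates `ι`. -/
def KrCons {Sig : Type} (Ax : Set (SPImp Sig)) (ι : SPImp Sig) : Prop :=
  ∀ F : KFrame Sig, F.ValidSet Ax → F.Valid ι

/-- `Ax ⊨_SLO ι`: every SLO validating every member of `Ax` validates `ι`. -/
def SLOCons {Sig : Type} (Ax : Set (SPImp Sig)) (ι : SPImp Sig) : Prop :=
  ∀ A : SLO Sig, A.ValidSet Ax → A.Valid ι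

/-- The spi-logic axiomatised by `Ax` is complete:
`Ax ⊨_Kr ι` iff `Ax ⊨_SLO ι` for every sp-implication `ι`. -/
def IsCompleteLogic {Sig : Type} (Ax : Set (SPImp Sig)) : Prop :=
  ∀ ι : SPImp Sig, KrCons Ax ι ↔ SLOCons Ax ι

/-- The spi-logic axiomatised by `Ax` is complex: every SLO validating every
member of `Ax` sp-embeds into the complex algebra of some frame validating
every member of `Ax`. -/
def IsComplexLogic {Sig : Type} (Ax : Set (SPImp Sig)) : Prop :=
  ∀ A : SLO Sig, A.ValidSet Ax →
    ∃ F : KFrame Sig, F.ValidSet Ax ∧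
      ∃ η : A.carrier → (KFrame.cmpl F).carrier, IsSpEmbedding A (KFrame.cmpl F) η

/-- The unimodal diamond. -/
def SP.d (φ : SP Unit) : SP Unit := SP.dia () φ

/-- `p → ◇p` (reflexivity). -/
def e_refl : SPImp Unit := (SP.var 0, (SP.var 0).d)

/-- `◇◇p → ◇p` (transitivity). -/
def e_trans : SPImp Unit := (((SP.var 0).d).d, (SP.var 0).d)

/-- `q ∧ ◇p → ◇(p ∧ ◇q)` (symmetry). -/
def e_sym : SPImp Unit :=
  ((SP.var 1).and ((SP.var 0).d), ((SP.var 0).and ((SP.var 1).d)).d)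

/-- The sp-formula contains an occurrence of the diamond `◇_r`. -/
def SP.ContainsDia {Sig : Type} (r : Sig) : SP Sig → Prop
  | .var _ => False
  | .top => False
  | .and φ ψ => φ.ContainsDia r ∨ ψ.ContainsDia r
  | .dia s φ => s = r ∨ φ.ContainsDia r

/-- The sp-formula contains an occurrence of the variable `n`. -/
def SP.HasVar {Sig : Type} (n : ℕ) : SP Sig → Prop
  | .var m => m = n
  | .top => False
  | .and φ ψ => φ.HasVar n ∨ ψ.HasVar n
  | .dia _ φ => φ.HasVar n

/-- Truth of a formula does not depend on variables not occurring in it. -/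
theorem truth_congr_var {Sig : Type} (F : KFrame Sig) (q : ℕ) (v v' : ℕ → Set F.world)
    (h : ∀ n, n ≠ q → v n = v' n) :
    ∀ (φ : SP Sig), ¬ φ.HasVar q → ∀ w, F.truth v φ w → F.truth v' φ w
  | .var n, hq, w, ht => by
      have hn : n ≠ q := hq
      have e := h n hn
      change w ∈ v' n
      rw [← e]
      exact ht
  | .top, _, _, _ => trivial
  | .and φ ψ, hq, w, ht =>
      ⟨truth_congr_var F q v v' h φ (fun a => hq (Or.inl a)) w ht.1,
       truth_congr_var F q v v' h ψ (fun a => hq (Or.inr a)) w ht.2⟩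
  | .dia _ φ, hq, _, ht => by
      obtain ⟨u, hu, ht⟩ := ht
      exact ⟨u, hu, truth_congr_var F q v v' h φ hq u ht⟩

/-- The two-element SLO with `◇_R` constantly bottom and all other diamonds
constantly top. -/
noncomputable def twoSLO {Sig : Type} (R : Sig) : SLO Sig where
  carrier := Prop
  dia r _ := r ≠ R
  mono _ := fun _ _ _ => le_refl _

/-- For distinct `R, S` in the signature, an sp-formula `σ` containing
`◇_S` but not `◇_R`, and a variable `q` not occurring in `σ`, the spi-logic
axiomatised by `{◇_R σ → q}` is not complete:
`{◇_R σ → q} ⊨_Kr ◇_S◇_R σ → ◇_R σ` but there is a SLO validating `◇_R σ → q`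
that does not validate `◇_S◇_R σ → ◇_R σ`. -/
theorem stmt11 {Sig : Type} (R S : Sig) (hRS : R ≠ S) (σ : SP Sig)
    (hS : σ.ContainsDia S) (hR : ¬ σ.ContainsDia R) (q : ℕ) (hq : ¬ σ.HasVar q) :
    KrCons ({(SP.dia R σ, SP.var q)} : Set (SPImp Sig))
      (SP.dia S (SP.dia R σ), SP.dia R σ) ∧
    (∃ A : SLO Sig, A.Valid (SP.dia R σ, SP.var q) ∧
      ¬ A.Valid (SP.dia S (SP.dia R σ), SP.dia R σ)) ∧
    ¬ SLOCons ({(SP.dia R σ, SP.var q)} : Set (SPImp Sig))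
      (SP.dia S (SP.dia R σ), SP.dia R σ) ∧
    ¬ IsCompleteLogic ({(SP.dia R σ, SP.var q)} : Set (SPImp Sig)) := by
  have hKr : KrCons ({(SP.dia R σ, SP.var q)} : Set (SPImp Sig))
      (SP.dia S (SP.dia R σ), SP.dia R σ) := by
    intro F hF v w hw
    obtain ⟨u, _, hu⟩ := hw
    have hq' : ¬ (SP.dia R σ).HasVar q := hq
    have h1 := truth_congr_var F q v (Function.update v q ∅)
      (fun n hn => (Function.update_of_ne hn _ _).symm) _ hq' u hu
    have h2 : u ∈ Function.update v q ∅ q := hF _ rfl _ u h1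
    rw [Function.update_self] at h2
    exact h2.elim
  have h1 : (twoSLO R).Valid (SP.dia R σ, SP.var q) := by
    intro v h
    exact absurd rfl h
  have h2 : ¬ (twoSLO R).Valid (SP.dia S (SP.dia R σ), SP.dia R σ) := by
    intro h
    exact (h (fun _ => True) (Ne.symm hRS)) rfl
  have h3 : ¬ SLOCons ({(SP.dia R σ, SP.var q)} : Set (SPImp Sig))
      (SP.dia S (SP.dia R σ), SP.dia R σ) := by
    intro h
    refine h2 (h _ ?_)
    rintro ι rfl
    exact h1
  exact ⟨hKr, ⟨_, h1, h2⟩, h3, fun h => h3 ((h _).1 hKr)⟩
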